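/- Let A be an n×n real symmetric matrix with entries a_{ij}. For every real x ≥ 0 and every eigenvalue λ of A, one has λ ≥ min_{1≤i≤n} d_i(A,x), where d_i(A,x) = a_{ii} − x − Σ_{j≠i} |a_{ij} − x|. In particular λ_min(A) ≥ sup_{x≥0} min_i d_i(A,x) (the shifted Gershgorin lower bound). -/

import Mathlib

/-- The shifted Gershgorin row function d_i(A,x) = a_{ii} − x − Σ_{j≠i} |a_{ij} − x|. -/
noncomputable def gershLower (n : ℕ) (A : Matrix (Fin n) (Fin n) ℝ) (x : ℝ) (i : Fin n) : ℝ :=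
  A i i - x - ∑ j ∈ Finset.univ.erase i, |A i j - x|

theorem gersh_quad (n : ℕ) (A : Matrix (Fin n) (Fin n) ℝ) (hA : A.IsHermitian) (x : ℝ)
    (hx : 0 ≤ x) (v : Fin n → ℝ) :
    ∑ i, gershLower n A x i * v i ^ 2 ≤ ∑ i, ∑ j, A i j * v i * v j := by
  have hs : ∀ i j, A i j = A j i := fun i j => by
    have := hA.apply i j
    simpa using this.symm
  let w : Fin n → Fin n → ℝ := fun i j => if i = j then 0 else |A i j - x|
  have hw : ∀ i j, w i j = w j i := fun i j => by
    simp only [w, hs i j, eq_comm]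
  have hd : ∀ i, gershLower n A x i = A i i - x - ∑ j, w i j := fun i => by
    unfold gershLower
    rw [← Finset.add_sum_erase Finset.univ (w i) (Finset.mem_univ i)]
    have : ∑ j ∈ Finset.univ.erase i, w i j = ∑ j ∈ Finset.univ.erase i, |A i j - x| :=
      Finset.sum_congr rfl fun j hj => by
        simp [w, (Finset.ne_of_mem_erase hj).symm]
    rw [this]; simp [w]
  have hterm : ∀ i j, (if i = j then (A i i - x) * v i ^ 2 else 0)
      - (w i j * v i ^ 2 / 2 + w i j * v j ^ 2 / 2) ≤ (A i j - x) * v i * v j := fun i j => by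
    by_cases h : i = j
    · subst h; simp [w]; apply le_of_eq; ring
    · simp only [w, h, if_false]
      rcases abs_cases (A i j - x) with ⟨h1, h2⟩ | ⟨h1, h2⟩ <;> rw [h1]
      · nlinarith [mul_nonneg h2 (sq_nonneg (v i + v j))]
      · nlinarith [mul_nonneg (neg_nonneg.2 h2.le) (sq_nonneg (v i - v j))]
  have hsum := Finset.sum_le_sum fun i (_ : i ∈ Finset.univ) =>
    Finset.sum_le_sum fun j (_ : j ∈ Finset.univ) => hterm i j
  have hswap : ∑ i, ∑ j, w i j * v j ^ 2 / 2 = ∑ i, ∑ j, w i j * v i ^ 2 / 2 := by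
    rw [Finset.sum_comm]
    exact Finset.sum_congr rfl fun i _ => Finset.sum_congr rfl fun j _ => by rw [hw]
  have hL : ∑ i, gershLower n A x i * v i ^ 2 = ∑ i, ∑ j,
      ((if i = j then (A i i - x) * v i ^ 2 else 0)
      - (w i j * v i ^ 2 / 2 + w i j * v j ^ 2 / 2)) := by
    simp only [Finset.sum_sub_distrib, Finset.sum_add_distrib]
    rw [hswap, ← Finset.sum_add_distrib, ← Finset.sum_sub_distrib]
    refine Finset.sum_congr rfl fun i _ => ?_
    rw [hd, ← Finset.sum_div, ← Finset.sum_mul]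
    simp
    ring
  have hR : ∑ i, ∑ j, A i j * v i * v j
      = ∑ i, ∑ j, (A i j - x) * v i * v j + x * (∑ i, v i) ^ 2 := by
    rw [sq, Finset.sum_mul_sum, Finset.mul_sum, ← Finset.sum_add_distrib]
    refine Finset.sum_congr rfl fun i _ => ?_
    rw [Finset.mul_sum, ← Finset.sum_add_distrib]
    exact Finset.sum_congr rfl fun j _ => by ring
  rw [hL, hR]
  have := mul_nonneg hx (sq_nonneg (∑ i, v i))
  linarith

theorem gersh_spec (n : ℕ) (A : Matrix (Fin n) (Fin n) ℝ) (hA : A.IsHermitian) (x : ℝ)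
    (hx : 0 ≤ x) (μ : ℝ) (hμ : μ ∈ spectrum ℝ A) : (⨅ i, gershLower n A x i) ≤ μ := by
  rw [← Matrix.spectrum_toLin', ← Module.End.hasEigenvalue_iff_mem_spectrum] at hμ
  obtain ⟨v, hv⟩ := hμ.exists_hasEigenvector
  have h0 := hv.2
  have h1 := hv.apply_eq_smul
  rw [Matrix.toLin'_apply] at h1
  have hq := gersh_quad n A hA x hx v
  have he : ∑ i, ∑ j, A i j * v i * v j = μ * ∑ i, v i ^ 2 := by
    rw [Finset.mul_sum]
    refine Finset.sum_congr rfl fun i _ => ?_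
    have := congrFun h1 i
    simp only [Matrix.mulVec, dotProduct, Pi.smul_apply, smul_eq_mul] at this
    calc _ = (∑ j, A i j * v j) * v i := by
          rw [Finset.sum_mul]; exact Finset.sum_congr rfl fun j _ => by ring
      _ = _ := by rw [this]; ring
  have hl : (⨅ i, gershLower n A x i) * ∑ i, v i ^ 2 ≤ ∑ i, gershLower n A x i * v i ^ 2 := by
    rw [Finset.mul_sum]
    exact Finset.sum_le_sum fun i _ => mul_le_mul_of_nonneg_right
      (ciInf_le (Set.finite_range _).bddBelow i) (sq_nonneg _)
  have hpos : 0 < ∑ i, v i ^ 2 := by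
    obtain ⟨i, hi⟩ := Function.ne_iff.1 h0
    exact Finset.sum_pos' (fun i _ => sq_nonneg _) ⟨i, Finset.mem_univ _, sq_pos_of_ne_zero hi⟩
  exact le_of_mul_le_mul_right (by linarith) hpos

/-- For every x ≥ 0, every eigenvalue of a real symmetric matrix A is at least
min_i d_i(A,x); in particular λ_min(A) ≥ sup_{x ≥ 0} min_i d_i(A,x). -/
theorem shifted_gershgorin_lower (n : ℕ) (hn : 0 < n)
    (A : Matrix (Fin n) (Fin n) ℝ) (hA : A.IsHermitian) :
    (∀ x : ℝ, 0 ≤ x → ∀ μ ∈ spectrum ℝ A, (⨅ i, gershLower n A x i) ≤ μ) ∧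
    (⨆ x : {x : ℝ // 0 ≤ x}, ⨅ i, gershLower n A x.1 i) ≤ ⨅ i, hA.eigenvalues i := by
  refine ⟨fun x hx μ hμ => gersh_spec n A hA x hx μ hμ, ?_⟩
  haveI : Nonempty (Fin n) := ⟨⟨0, hn⟩⟩
  haveI : Nonempty {x : ℝ // 0 ≤ x} := ⟨⟨0, le_rfl⟩⟩
  exact ciSup_le fun x => le_ciInf fun i =>
    gersh_spec n A hA x.1 x.2 _ (hA.eigenvalues_mem_spectrum_real i)
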